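/- arXiv:2506.16162 — 2 statements merged into one kernel-verified Lean document; each statement's English description precedes it below -/
import Mathlib

section
/- Let r > 0, λ > 0, ρ > 0, β > 0, α ∈ ℝ, η ∈ ℝ, τ > -1, and let n ≥ 1 be an integer. Define s = √(r²/4 + n²λ²ρ/((1+τ)β)), u₂ = (r/2 − s)/λ², v₂ = (r/2 − s)·(1+τ)β/(nλ²), B = nα/β, D = nλ²v₂/((1+τ)β) − (λ²u₂ − r), u₁ = (n/((1+τ)β))·((λB·v₂ − nη)/D) / (1 − (nλ²v₂/((1+τ)β))/D), and v₁ = ((λ²u₁ + λB)·v₂ − nη)/D. Then D = r and v₁ = (α(1+τ)(r/2 − s) − nηλ) / (λ·(r/2 + s)). -/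
/-!
Put `w = r/2 - s` for the common value of `λ²u₂` and of the feedback term `nλ²v₂/((1+τ)β)`.
The two occurrences of `w` cancel in `D`, leaving `D = r`. With `k = n/((1+τ)β)` and
`c = λBv₂ - nη`, the formulas for `u₁` and `v₁` solve the linear system `u₁ = k v₁`,
`D v₁ = λ²v₂ u₁ + c`, in which `λ²v₂ k = w`; hence `v₁ = c/(r - w) = c/(r/2 + s)`.
The damage parameter `ρ` enters only through `s`.
-/

section FeedbackElimination

variable {K : Type*} [Field K] {D : K}

lemma div_div_one_sub_div (hD : D ≠ 0) (c x : K) : c / D / (1 - x / D) = c / (D - x) := by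
  rw [div_div, mul_one_sub, mul_div_cancel₀ x hD]

lemma feedback_mul_div_sub_add_div {x : K} (hD : D ≠ 0) (hx : D - x ≠ 0) (c : K) :
    (x * (c / (D - x)) + c) / D = c / (D - x) := by
  field_simp
  ring

lemma closedLoop_eq_div_sub {k g : K} (hD : D ≠ 0) (h : D - k * g ≠ 0) (c : K) :
    (g * (k * (c / D) / (1 - k * g / D)) + c) / D = c / (D - k * g) := by
  rw [mul_div_assoc k, div_div_one_sub_div hD, ← mul_assoc, mul_comm g k,
    feedback_mul_div_sub_add_div hD h]

end FeedbackElimination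

section QuadraticCoeff

variable {K : Type*} [Field K] {n lam β τ : K}

/-- The coefficient `v₂` of the post-tipping value function, as a function of `w = λ²u₂`. -/
def quadraticCoeff (n lam β τ w : K) : K := w * (1 + τ) * β / (n * lam ^ 2)

lemma feedback_quadraticCoeff (hn : n ≠ 0) (hlam : lam ≠ 0) (hβ : β ≠ 0) (hτ : 1 + τ ≠ 0)
    (w : K) : n * lam ^ 2 * quadraticCoeff n lam β τ w / ((1 + τ) * β) = w := by
  unfold quadraticCoeff
  field_simp

lemma forcing_quadraticCoeff (hn : n ≠ 0) (hlam : lam ≠ 0) (hβ : β ≠ 0) (α η w : K) :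
    lam * (n * α / β) * quadraticCoeff n lam β τ w - n * η =
      (α * (1 + τ) * w - n * η * lam) / lam := by
  unfold quadraticCoeff
  field_simp

end QuadraticCoeff

theorem stmt_13_general {K : Type*} [Field K] [NeZero (2 : K)] {r lam β τ n s : K} (α η : K)
    (hr : r ≠ 0) (hlam : lam ≠ 0) (hβ : β ≠ 0) (hτ : 1 + τ ≠ 0) (hn : n ≠ 0)
    (hs : r / 2 + s ≠ 0) :
    let u2 : K := (r / 2 - s) / lam ^ 2
    let v2 : K := quadraticCoeff n lam β τ (r / 2 - s)
    let B : K := n * α / β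
    let D : K := n * lam ^ 2 * v2 / ((1 + τ) * β) - (lam ^ 2 * u2 - r)
    let u1 : K := (n / ((1 + τ) * β)) * ((lam * B * v2 - n * η) / D)
      / (1 - (n * lam ^ 2 * v2 / ((1 + τ) * β)) / D)
    let v1 : K := ((lam ^ 2 * u1 + lam * B) * v2 - n * η) / D
    D = r ∧ v1 = (α * (1 + τ) * (r / 2 - s) - n * η * lam) / (lam * (r / 2 + s)) := by
  intro u2 v2 B D u1 v1
  have feedback : n * lam ^ 2 * v2 / ((1 + τ) * β) = r / 2 - s :=
    feedback_quadraticCoeff hn hlam hβ hτ _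
  have gain : n / ((1 + τ) * β) * (lam ^ 2 * v2) = r / 2 - s := by rw [← feedback]; ring
  have hD : D = r := by
    simp only [D, u2, feedback, mul_div_cancel₀ _ (pow_ne_zero 2 hlam), sub_sub_cancel]
  have denominator : r - (r / 2 - s) = r / 2 + s := by rw [← sub_add, sub_half]
  refine ⟨hD, ?_⟩
  calc
    v1 = (lam ^ 2 * v2 * u1 + (lam * B * v2 - n * η)) / D := by simp only [v1]; ring
    _ = (lam * B * v2 - n * η) / (r / 2 + s) := by
      simp only [u1, hD, feedback]
      rw [← gain, closedLoop_eq_div_sub hr (by rwa [gain, denominator]), gain, denominator]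
    _ = (α * (1 + τ) * (r / 2 - s) - n * η * lam) / lam / (r / 2 + s) :=
      congrArg (· / (r / 2 + s)) (forcing_quadraticCoeff hn hlam hβ α η _)
    _ = _ := div_div _ _ _

/-- Exact closed-form simplification of the linear coefficient `v₁` of the
post-tipping cooperative value function in the homogeneous grand-coalition case:
`D = r` and `v₁ = (α(1+τ)(r/2 − s) − nηλ)/(λ(r/2 + s))`. -/
theorem stmt_13 (r lam ρ β α η τ : ℝ) (n : ℕ) (hr : 0 < r) (hlam : 0 < lam)
    (hρ : 0 < ρ) (hβ : 0 < β) (hτ : -1 < τ) (hn : 1 ≤ n) :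
    let s : ℝ := Real.sqrt (r ^ 2 / 4 + (n : ℝ) ^ 2 * lam ^ 2 * ρ / ((1 + τ) * β))
    let u2 : ℝ := (r / 2 - s) / lam ^ 2
    let v2 : ℝ := (r / 2 - s) * (1 + τ) * β / ((n : ℝ) * lam ^ 2)
    let B : ℝ := (n : ℝ) * α / β
    let D : ℝ := (n : ℝ) * lam ^ 2 * v2 / ((1 + τ) * β) - (lam ^ 2 * u2 - r)
    let u1 : ℝ := ((n : ℝ) / ((1 + τ) * β)) * ((lam * B * v2 - (n : ℝ) * η) / D)
      / (1 - ((n : ℝ) * lam ^ 2 * v2 / ((1 + τ) * β)) / D)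
    let v1 : ℝ := ((lam ^ 2 * u1 + lam * B) * v2 - (n : ℝ) * η) / D
    D = r ∧
      v1 = (α * (1 + τ) * (r / 2 - s) - (n : ℝ) * η * lam) / (lam * (r / 2 + s)) := by
  intro s
  exact stmt_13_general α η hr.ne' hlam.ne' hβ.ne' (by linarith) (by positivity) (by positivity)
end

section
/- Let r > 0, λ > 0, ρ > 0, β > 0. For each positive integer n define u₂ʷ(n) = (n·r − √(n²r² + 4(2n−1)·λ²·n²·ρ/β)) / (2(2n−1)·λ²), x(n) = λ²·u₂ʷ(n) − r/2, and w₂(n) = (β/λ²)·(x(n) + √(x(n)² − λ²ρ/β)) (with the square root interpreted as Real.sqrt, which is 0 on negative inputs; the radicand is positive for all sufficiently large n). Then √n · w₂(n) converges, as n → ∞, to −√(ρβ/2)/λ. -/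
/-!
With `c = λ²ρ/β` and `m = 2n - 1`, the product `λ²u₂ʷ(n)` is `n` times the negative root `v` of
`m v² - r v - c = 0`. For large `m` the linear term is negligible, so `v ~ -√(c/m)` and hence
`x(n) ~ -√(c/2) √n`. On the other side, `x + √(x² - c) = c / (x - √(x² - c)) ~ c / (2x)` as
`x → -∞`, and multiplying by `√n` leaves the finite limit.
-/

open Filter Topology

/-- The smaller root `v` of the quadratic equation `m v² - r v - c = 0`, for `0 < m`. -/
noncomputable def smallerRoot (m r c : ℝ) : ℝ :=
  (r - √(r ^ 2 + 4 * m * c)) / (2 * m)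

/-- The aggregate quadratic coefficient `u₂ʷ(n)` of `n` identical non-cooperative regions. The
number of regions is a real variable, so that limits are taken along `atTop` in `ℝ`. -/
noncomputable def aggregateCoeff (r lam ρ β n : ℝ) : ℝ :=
  (n * r - √(n ^ 2 * r ^ 2 + 4 * (2 * n - 1) * lam ^ 2 * n ^ 2 * ρ / β)) /
    (2 * (2 * n - 1) * lam ^ 2)

/-- The paper's `x(n) = λ²u₂ʷ(n) - r/2`, half the sum of the roots `ω` of the quadratic equation
`ω² - 2 x(n) ω + λ²ρ/β = 0` satisfied by `ω = λ²w₂(n)/β`. -/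
noncomputable def shiftedAggregate (r lam ρ β n : ℝ) : ℝ :=
  lam ^ 2 * aggregateCoeff r lam ρ β n - r / 2

/-- The quadratic coefficient `w₂(n)` of each region's post-tipping value function, again for a
real number `n` of regions. -/
noncomputable def regionalCoeff (r lam ρ β n : ℝ) : ℝ :=
  β / lam ^ 2 * (shiftedAggregate r lam ρ β n +
    √(shiftedAggregate r lam ρ β n ^ 2 - lam ^ 2 * ρ / β))

lemma tendsto_inv_sqrt_atTop : Tendsto (fun t : ℝ ↦ (√t)⁻¹) atTop (𝓝 0) :=
  tendsto_inv_atTop_zero.comp Real.tendsto_sqrt_atTop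

lemma sqrt_mul_smallerRoot {m : ℝ} (hm : 0 < m) (r c : ℝ) :
    √m * smallerRoot m r c = (r * (√m)⁻¹ - √(r ^ 2 * m⁻¹ + 4 * c)) / 2 := by
  have discriminant_eq : r ^ 2 + 4 * m * c = m * (r ^ 2 * m⁻¹ + 4 * c) := by field_simp
  rw [smallerRoot, discriminant_eq, Real.sqrt_mul hm.le]
  field_simp
  rw [Real.sq_sqrt hm.le]

lemma tendsto_sqrt_mul_smallerRoot (r c : ℝ) :
    Tendsto (fun m ↦ √m * smallerRoot m r c) atTop (𝓝 (-√c)) := by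
  have sqrt_tendsto : Tendsto (fun m : ℝ ↦ √(r ^ 2 * m⁻¹ + 4 * c)) atTop (𝓝 √(4 * c)) := by
    simpa using ((tendsto_inv_atTop_zero.const_mul (r ^ 2)).add_const (4 * c)).sqrt
  have limit_eq : (r * 0 - √(4 * c)) / 2 = -√c := by
    rw [Real.sqrt_mul (by norm_num), show (4 : ℝ) = 2 ^ 2 by norm_num,
      Real.sqrt_sq (by norm_num)]
    ring
  rw [← limit_eq]
  refine (((tendsto_inv_sqrt_atTop.const_mul r).sub sqrt_tendsto).div_const 2).congr' ?_
  filter_upwards [eventually_gt_atTop 0] with m hm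
  exact (sqrt_mul_smallerRoot hm r c).symm

lemma tendsto_div_two_mul_sub_one_atTop :
    Tendsto (fun n : ℝ ↦ n / (2 * n - 1)) atTop (𝓝 (1 / 2)) := by
  have inv_tendsto : Tendsto (fun n : ℝ ↦ (2 - n⁻¹)⁻¹) atTop (𝓝 (1 / 2)) := by
    simpa using (tendsto_inv_atTop_zero.const_sub (2 : ℝ)).inv₀ (by norm_num)
  refine inv_tendsto.congr' ?_
  filter_upwards [eventually_gt_atTop 0] with n hn
  rw [show 2 - n⁻¹ = (2 * n - 1) / n by field_simp, inv_div]

lemma sq_mul_aggregateCoeff {lam n : ℝ} (hlam : lam ≠ 0) (hn : 0 ≤ n) (r ρ β : ℝ) :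
    lam ^ 2 * aggregateCoeff r lam ρ β n =
      n * smallerRoot (2 * n - 1) r (lam ^ 2 * ρ / β) := by
  have discriminant_eq :
      n ^ 2 * r ^ 2 + 4 * (2 * n - 1) * lam ^ 2 * n ^ 2 * ρ / β =
        n ^ 2 * (r ^ 2 + 4 * (2 * n - 1) * (lam ^ 2 * ρ / β)) := by
    ring
  rw [aggregateCoeff, smallerRoot, discriminant_eq, Real.sqrt_mul (sq_nonneg n),
    Real.sqrt_sq hn, ← mul_sub]
  field_simp

lemma shiftedAggregate_div_sqrt {lam n : ℝ} (hlam : lam ≠ 0) (hn : 1 / 2 < n) (r ρ β : ℝ) :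
    shiftedAggregate r lam ρ β n / √n =
      √(n / (2 * n - 1)) * (√(2 * n - 1) * smallerRoot (2 * n - 1) r (lam ^ 2 * ρ / β)) -
        r / 2 * (√n)⁻¹ := by
  have n_nonneg : 0 ≤ n := by linarith
  have sqrt_ne_zero : √(2 * n - 1) ≠ 0 := (Real.sqrt_pos.mpr (by linarith)).ne'
  rw [shiftedAggregate, sq_mul_aggregateCoeff hlam n_nonneg, sub_div, mul_div_right_comm,
    Real.div_sqrt, Real.sqrt_div n_nonneg, ← mul_assoc, div_mul_cancel₀ _ sqrt_ne_zero,
    div_eq_mul_inv (r / 2)]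

lemma tendsto_shiftedAggregate_div_sqrt {lam : ℝ} (hlam : lam ≠ 0) (r ρ β : ℝ) :
    Tendsto (fun n ↦ shiftedAggregate r lam ρ β n / √n) atTop
      (𝓝 (-√(lam ^ 2 * ρ / β / 2))) := by
  set c := lam ^ 2 * ρ / β
  have two_mul_sub_one : Tendsto (fun n : ℝ ↦ 2 * n - 1) atTop atTop :=
    tendsto_atTop_add_const_right _ _ (tendsto_id.const_mul_atTop two_pos)
  have limit_eq : √(1 / 2) * -√c - r / 2 * 0 = -√(c / 2) := by
    rw [mul_zero, sub_zero, mul_neg, ← Real.sqrt_mul (by norm_num), one_div_mul_eq_div]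
  rw [← limit_eq]
  refine ((tendsto_div_two_mul_sub_one_atTop.sqrt.mul
    ((tendsto_sqrt_mul_smallerRoot r c).comp two_mul_sub_one)).sub
    (tendsto_inv_sqrt_atTop.const_mul (r / 2))).congr' ?_
  filter_upwards [eventually_gt_atTop (1 / 2)] with n hn
  exact (shiftedAggregate_div_sqrt hlam hn r ρ β).symm

lemma mul_add_sqrt_sq_sub_eq {c t : ℝ} (ht : t < 0) (hc : c ≤ t ^ 2) :
    t * (t + √(t ^ 2 - c)) = c / (1 + √(1 - c / t ^ 2)) := by
  have t_ne_zero : t ≠ 0 := ht.ne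
  have t_sq_pos : 0 < t ^ 2 := sq_pos_of_neg ht
  have sqrt_eq : √(t ^ 2 - c) = -t * √(1 - c / t ^ 2) := by
    rw [show t ^ 2 - c = (-t) ^ 2 * (1 - c / t ^ 2) by field_simp,
      Real.sqrt_mul (sq_nonneg _), Real.sqrt_sq (by linarith)]
  have sqrt_sq : √(1 - c / t ^ 2) ^ 2 = 1 - c / t ^ 2 :=
    Real.sq_sqrt (sub_nonneg.mpr ((div_le_one t_sq_pos).mpr hc))
  rw [eq_div_iff (by positivity), sqrt_eq]
  calc t * (t + -t * √(1 - c / t ^ 2)) * (1 + √(1 - c / t ^ 2))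
      = t ^ 2 * (1 - √(1 - c / t ^ 2) ^ 2) := by ring
    _ = t ^ 2 * (c / t ^ 2) := by rw [sqrt_sq, sub_sub_cancel]
    _ = c := mul_div_cancel₀ c t_sq_pos.ne'

lemma tendsto_mul_add_sqrt_sq_sub_atBot (c : ℝ) :
    Tendsto (fun t ↦ t * (t + √(t ^ 2 - c))) atBot (𝓝 (c / 2)) := by
  have sq_tendsto : Tendsto (fun t : ℝ ↦ t ^ 2) atBot atTop := by
    simpa only [Function.comp_def, neg_sq] using
      (tendsto_pow_atTop (α := ℝ) two_ne_zero).comp tendsto_neg_atBot_atTop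
  have rationalized : Tendsto (fun t : ℝ ↦ c / (1 + √(1 - c / t ^ 2))) atBot (𝓝 (c / 2)) := by
    have sqrt_tendsto : Tendsto (fun t : ℝ ↦ √(1 - c / t ^ 2)) atBot (𝓝 1) := by
      simpa using ((sq_tendsto.const_div_atTop c).const_sub 1).sqrt
    have denom_tendsto : Tendsto (fun t : ℝ ↦ 1 + √(1 - c / t ^ 2)) atBot (𝓝 2) := by
      simpa only [one_add_one_eq_two] using sqrt_tendsto.const_add 1
    exact tendsto_const_nhds.div denom_tendsto two_ne_zero
  refine rationalized.congr' ?_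
  filter_upwards [eventually_lt_atBot 0, sq_tendsto.eventually_ge_atTop c] with t ht hc
  exact (mul_add_sqrt_sq_sub_eq ht hc).symm

lemma tendsto_mul_add_sqrt_sq_sub {ι : Type*} {l : Filter ι} {f g : ι → ℝ} {a : ℝ}
    (hg : Tendsto g l atTop) (hfg : Tendsto (fun i ↦ f i / g i) l (𝓝 a)) (ha : a < 0) (c : ℝ) :
    Tendsto (fun i ↦ g i * (f i + √(f i ^ 2 - c))) l (𝓝 (c / 2 / a)) := by
  have f_atBot : Tendsto f l atBot := by
    refine (hfg.neg_mul_atTop ha hg).congr' ?_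
    filter_upwards [hg.eventually_ne_atTop 0] with i hi
    exact div_mul_cancel₀ (f i) hi
  refine (((tendsto_mul_add_sqrt_sq_sub_atBot c).comp f_atBot).div hfg ha.ne).congr' ?_
  filter_upwards [f_atBot.eventually_ne_atBot 0] with i hi
  simp only [Function.comp_apply, Pi.div_apply]
  field_simp

lemma div_sq_mul_sqrt_half {lam β : ℝ} (hlam : 0 < lam) (hβ : 0 < β) (ρ : ℝ) :
    β / lam ^ 2 * √(lam ^ 2 * ρ / β / 2) = √(ρ * β / 2) / lam := by
  rw [show lam ^ 2 * ρ / β / 2 = (lam / β) ^ 2 * (ρ * β / 2) by field_simp,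
    Real.sqrt_mul (sq_nonneg _), Real.sqrt_sq (by positivity)]
  field_simp

theorem stmt_17_general (r : ℝ) {lam ρ β : ℝ} (hlam : 0 < lam) (hρ : 0 < ρ) (hβ : 0 < β) :
    Tendsto (fun n ↦ √n * regionalCoeff r lam ρ β n) atTop (𝓝 (-(√(ρ * β / 2) / lam))) := by
  set c := lam ^ 2 * ρ / β with hc
  have slope_neg : -√(c / 2) < 0 := neg_neg_of_pos (Real.sqrt_pos.mpr (by positivity))
  have limit_eq : β / lam ^ 2 * (c / 2 / -√(c / 2)) = -(√(ρ * β / 2) / lam) := by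
    rw [div_neg, Real.div_sqrt, mul_neg, hc, div_sq_mul_sqrt_half hlam hβ]
  rw [← limit_eq]
  refine ((tendsto_mul_add_sqrt_sq_sub Real.tendsto_sqrt_atTop
    (tendsto_shiftedAggregate_div_sqrt hlam.ne' r ρ β) slope_neg c).const_mul
    (β / lam ^ 2)).congr fun n ↦ ?_
  rw [regionalCoeff, mul_left_comm]

/-- Asymptotics of the non-cooperative quadratic value-function coefficient:
`√n · w₂(n) → −√(ρβ/2)/λ` as `n → ∞`, where
`w₂(n) = (β/λ²)(x(n) + √(x(n)² − λ²ρ/β))` and `x(n) = λ²u₂ʷ(n) − r/2`. -/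
theorem stmt_17 (r lam ρ β : ℝ) (hr : 0 < r) (hlam : 0 < lam)
    (hρ : 0 < ρ) (hβ : 0 < β) :
    let u2w : ℕ → ℝ := fun n =>
      ((n : ℝ) * r -
        Real.sqrt ((n : ℝ) ^ 2 * r ^ 2 +
          4 * (2 * (n : ℝ) - 1) * lam ^ 2 * (n : ℝ) ^ 2 * ρ / β))
      / (2 * (2 * (n : ℝ) - 1) * lam ^ 2)
    let x : ℕ → ℝ := fun n => lam ^ 2 * u2w n - r / 2
    let w2 : ℕ → ℝ := fun n =>
      (β / lam ^ 2) * (x n + Real.sqrt ((x n) ^ 2 - lam ^ 2 * ρ / β))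
    Filter.Tendsto (fun n : ℕ => Real.sqrt (n : ℝ) * w2 n)
      Filter.atTop
      (nhds (-(Real.sqrt (ρ * β / 2) / lam))) :=
  (stmt_17_general r hlam hρ hβ).comp tendsto_natCast_atTop_atTop
end
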